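/- Two LWF chain graphs G and H over the same finite vertex set V are Markov equivalent if and only if they represent the same separations, i.e. the set of probability distributions on ℝ^V satisfying the global Markov property with respect to G equals the set satisfying it with respect to H if and only if, for all pairwise disjoint X, Y, Z ⊆ V, X ⊥_G Y | Z holds exactly when X ⊥_H Y | Z holds. -/

import Mathlib

open Matrix MeasureTheory ProbabilityTheory

attribute [local instance] Classical.propDecidable

noncomputable section

variable {V : Type*}

/-- The submatrix of `S` with rows indexed by `X` and columns indexed by `Y`. -/
def msub (S : Matrix V V ℝ) (X Y : Finset V) : Matrix X Y ℝ :=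
  Matrix.of fun i j => S i.1 j.1

/-- Conditional independence `X ⊥ Y | Z` for a centered Gaussian distribution with
positive definite covariance matrix `S`:  `Σ_{X,Y} − Σ_{X,Z} (Σ_{Z,Z})⁻¹ Σ_{Z,Y} = 0`. -/
def gaussCI [Fintype V] [DecidableEq V] (S : Matrix V V ℝ) (X Y Z : Finset V) : Prop :=
  msub S X Y - msub S X Z * (msub S Z Z)⁻¹ * msub S Z Y = 0

/-- Pairwise disjointness of three sets. -/
def PDisj (X Y Z : Finset V) : Prop :=
  Disjoint X Y ∧ Disjoint X Z ∧ Disjoint Y Z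

/-- Pairwise disjointness of four sets. -/
def PDisj4 (X Y W Z : Finset V) : Prop :=
  Disjoint X Y ∧ Disjoint X W ∧ Disjoint X Z ∧ Disjoint Y W ∧ Disjoint Y Z ∧ Disjoint W Z

/-- A graph with three kinds of edges: undirected (`undir`), solid directed (`solid`,
written `A → B`) and dashed directed (`dashed`, written `A ⇢ B`).  No axioms are imposed. -/
structure PreGraph (V : Type*) where
  undir : V → V → Prop
  solid : V → V → Prop
  dashed : V → V → Prop

namespace PreGraph

variable (G : PreGraph V)

/-- There is an undirected edge between `a` and `b`. -/
def und (a b : V) : Prop := G.undir a b ∨ G.undir b a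

/-- `a` and `b` are adjacent. -/
def adj (a b : V) : Prop :=
  G.und a b ∨ G.solid a b ∨ G.solid b a ∨ G.dashed a b ∨ G.dashed b a

/-- The edge between `a` and `b` is undirected or directed (solid or dashed) from `a` to `b`. -/
def fwd (a b : V) : Prop := G.und a b ∨ G.solid a b ∨ G.dashed a b

/-- A route in `G`: a sequence of nodes `nodes 0, nodes 1, …, nodes len` such that
consecutive nodes are adjacent. -/
structure Route (G : PreGraph V) where
  len : ℕ
  nodes : ℕ → V
  adj_step : ∀ i < len, G.adj (nodes i) (nodes (i + 1))

/-- `c` is a collider node between `a` and `b`:  `a ⇢ c ⇠ b`, `a ⇢ c − b` (in either of the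
two traversal directions) or `a ⇢ c ← b` (in either of the two traversal directions). -/
def colliderTriple (a c b : V) : Prop :=
  (G.dashed a c ∧ G.dashed b c) ∨
  (G.dashed a c ∧ G.und c b) ∨ (G.und a c ∧ G.dashed b c) ∨
  (G.dashed a c ∧ G.solid b c) ∨ (G.solid a c ∧ G.dashed b c)

variable {G} in
/-- The node at position `k` of the route `ρ` is a collider node of `ρ`. -/
def Route.colliderNodeAt (ρ : G.Route) (k : ℕ) : Prop :=
  1 ≤ k ∧ k < ρ.len ∧ G.colliderTriple (ρ.nodes (k - 1)) (ρ.nodes k) (ρ.nodes (k + 1))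

variable {G} in
/-- The positions `p, …, q` of `ρ` form a collider section of `ρ`, i.e. a maximal undirected
subroute `C1 − ⋯ − Cn` of `ρ` such that `A → C1 − ⋯ − Cn ← B` is a subroute of `ρ`. -/
def Route.colliderSectionOcc (ρ : G.Route) (p q : ℕ) : Prop :=
  1 ≤ p ∧ p ≤ q ∧ q + 1 ≤ ρ.len ∧
  (∀ m, p ≤ m → m < q → G.und (ρ.nodes m) (ρ.nodes (m + 1))) ∧
  G.solid (ρ.nodes (p - 1)) (ρ.nodes p) ∧ G.solid (ρ.nodes (q + 1)) (ρ.nodes q)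

variable {G} in
/-- The node at position `k` of `ρ` lies in a collider section of `ρ`. -/
def Route.inColliderSectionAt (ρ : G.Route) (k : ℕ) : Prop :=
  ∃ p q, ρ.colliderSectionOcc p q ∧ p ≤ k ∧ k ≤ q

variable {G} in
/-- The route `ρ` is `Z`-open: (i) all collider nodes are in `Z`, (ii) every collider
section contains some node of `Z`, and (iii) every node which is neither a collider node
nor inside a collider section is outside `Z`. -/
def Route.IsZOpen (ρ : G.Route) (Z : Finset V) : Prop :=
  (∀ k, ρ.colliderNodeAt k → ρ.nodes k ∈ Z) ∧
  (∀ p q, ρ.colliderSectionOcc p q → ∃ m, p ≤ m ∧ m ≤ q ∧ ρ.nodes m ∈ Z) ∧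
  (∀ k ≤ ρ.len, ¬ ρ.colliderNodeAt k → ¬ ρ.inColliderSectionAt k → ρ.nodes k ∉ Z)

variable {G} in
/-- A pure collider route (with at least one edge): every intermediate node is a collider
node or lies in a collider section of the route. -/
def Route.IsPureCollider (ρ : G.Route) : Prop :=
  1 ≤ ρ.len ∧ ∀ k, 0 < k → k < ρ.len → ρ.colliderNodeAt k ∨ ρ.inColliderSectionAt k

/-- Separation `X ⊥_G Y | Z`: there is no `Z`-open route in `G` between a node of `X` and a
node of `Y`. -/
def Sep (X Y Z : Finset V) : Prop :=
  ¬ ∃ ρ : G.Route,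
      ((ρ.nodes 0 ∈ X ∧ ρ.nodes ρ.len ∈ Y) ∨ (ρ.nodes 0 ∈ Y ∧ ρ.nodes ρ.len ∈ X)) ∧
      ρ.IsZOpen Z

section Finite

variable [Fintype V] [DecidableEq V]

/-- The fathers of `X`: nodes `b` with `b → a` in `G` for some `a ∈ X`. -/
def fa (X : Finset V) : Finset V := Finset.univ.filter fun b => ∃ a ∈ X, G.solid b a

/-- The mothers of `X`: nodes `b` with `b ⇢ a` in `G` for some `a ∈ X`. -/
def mo (X : Finset V) : Finset V := Finset.univ.filter fun b => ∃ a ∈ X, G.dashed b a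

/-- The parents of `X`. -/
def pa (X : Finset V) : Finset V := G.fa X ∪ G.mo X

/-- The neighbors of `X`: nodes `b` with `b − a` in `G` for some `a ∈ X`. -/
def nb (X : Finset V) : Finset V := Finset.univ.filter fun b => ∃ a ∈ X, G.und b a

/-- There is a descending route from `a` to `b`: all edges undirected or directed in the
direction of travel, containing at least one directed edge. -/
def descends (a b : V) : Prop :=
  ∃ (n : ℕ) (f : ℕ → V), f 0 = a ∧ f n = b ∧ (∀ i < n, G.fwd (f i) (f (i + 1))) ∧
    ∃ i < n, G.solid (f i) (f (i + 1)) ∨ G.dashed (f i) (f (i + 1))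

/-- The non-descendants of `X`. -/
def nd (X : Finset V) : Finset V := Finset.univ.filter fun b => ¬ ∃ a ∈ X, G.descends a b

/-- Connectivity by undirected routes. -/
def uconn : V → V → Prop := Relation.ReflTransGen G.und

/-- The chain component containing `i`. -/
def cc (i : V) : Finset V := Finset.univ.filter fun j => G.uconn i j

/-- The set of chain components of `G`. -/
def ccs : Finset (Finset V) := Finset.univ.image G.cc

/-- The nodes incident to some edge of `G`. -/
def verts : Finset V := Finset.univ.filter fun a => ∃ b, G.adj a b

/-- `π` is a topological ordering of the chain components: it is constant on components and
increases along directed edges. -/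
def IsTopoOrder (π : V → ℕ) : Prop :=
  (∀ a b, G.uconn a b → π a = π b) ∧ ∀ a b, G.solid a b ∨ G.dashed a b → π a < π b

/-- Equation 1: for every topological ordering of the chain components, each component `K`
is independent of the preceding components minus `Pa(K)` given `Pa(K)`. -/
def eq1 (S : Matrix V V ℝ) : Prop :=
  ∀ π : V → ℕ, G.IsTopoOrder π → ∀ i : V,
    gaussCI S (G.cc i) ((Finset.univ.filter fun b => π b < π i) \ G.pa (G.cc i))
      (G.pa (G.cc i))

/-- The regression coefficients `β_K = Σ_{K,Pa(K)} (Σ_{Pa(K),Pa(K)})⁻¹`. -/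
def beta (S : Matrix V V ℝ) (K : Finset V) : Matrix K (G.pa K) ℝ :=
  msub S K (G.pa K) * (msub S (G.pa K) (G.pa K))⁻¹

/-- The conditional covariance matrix `Λ_K`. -/
def lam (S : Matrix V V ℝ) (K : Finset V) : Matrix K K ℝ :=
  msub S K K - msub S K (G.pa K) * (msub S (G.pa K) (G.pa K))⁻¹ * msub S (G.pa K) K

/-- The precision matrix `Ω = (Σ_{K ∪ Pa(K), K ∪ Pa(K)})⁻¹`. -/
def om (S : Matrix V V ℝ) (K : Finset V) : Matrix ↥(K ∪ G.pa K) ↥(K ∪ G.pa K) ℝ :=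
  (msub S (K ∪ G.pa K) (K ∪ G.pa K))⁻¹

/-- Equation 6: `(β_K)_{i,j} = 0` for all `i ∈ K` and `j ∈ Mo(K) ∖ Mo(i)`. -/
def eq6 (S : Matrix V V ℝ) : Prop :=
  ∀ K ∈ G.ccs, ∀ i (hi : i ∈ K), ∀ j (hj : j ∈ G.pa K),
    j ∈ G.mo K → j ∉ G.mo {i} → G.beta S K ⟨i, hi⟩ ⟨j, hj⟩ = 0

/-- Equation 7: `Ω_{i,j} = 0` for all `i ∈ K` and `j ∈ Fa(K) ∖ Fa(i)`. -/
def eq7 (S : Matrix V V ℝ) : Prop :=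
  ∀ K ∈ G.ccs, ∀ i (hi : i ∈ K), ∀ j (hj : j ∈ G.pa K),
    j ∈ G.fa K → j ∉ G.fa {i} →
    G.om S K ⟨i, Finset.mem_union_left _ hi⟩ ⟨j, Finset.mem_union_right _ hj⟩ = 0

/-- Equation 8: `(Λ_K⁻¹)_{i,j} = 0` for all `i ∈ K` and `j ∈ K ∖ ({i} ∪ Ne(i))`. -/
def eq8 (S : Matrix V V ℝ) : Prop :=
  ∀ K ∈ G.ccs, ∀ i (hi : i ∈ K), ∀ j (hj : j ∈ K),
    j ≠ i → j ∉ G.nb {i} → (G.lam S K)⁻¹ ⟨i, hi⟩ ⟨j, hj⟩ = 0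

/-- `p` satisfies Equation 1 and the zero restrictions of Equations 6–8 w.r.t. `G`. -/
def eqs (S : Matrix V V ℝ) : Prop := G.eq1 S ∧ G.eq6 S ∧ G.eq7 S ∧ G.eq8 S

/-- The global Markov property with respect to `G`, for an abstract ternary
(conditional-independence) relation `I`. -/
def globalMP (I : Finset V → Finset V → Finset V → Prop) : Prop :=
  ∀ X Y Z : Finset V, PDisj X Y Z → G.Sep X Y Z → I X Y Z

/-- The block-recursive Markov property (B1)–(B3) with respect to `G`. -/
def blockRecMP (I : Finset V → Finset V → Finset V → Prop) : Prop :=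
  ∀ K ∈ G.ccs, ∀ i ∈ K,
    I {i} (((G.nd K \ K) \ G.fa K) \ G.mo {i}) (G.fa K ∪ G.mo {i}) ∧
    I {i} (((G.nd K \ K) \ G.fa {i}) \ G.mo K) ((K \ {i}) ∪ G.fa {i} ∪ G.mo K) ∧
    ∀ j ∈ K, j ≠ i → j ∉ G.nb {i} → I {i} {j} ((K \ {i, j}) ∪ G.pa K)

/-- The pairwise Markov property (P1)–(P2) with respect to `G`. -/
def pairwiseMP (I : Finset V → Finset V → Finset V → Prop) : Prop :=
  ∀ i j : V, i ≠ j → ¬ G.adj i j → ∀ K ∈ G.ccs, i ∈ K →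
    (j ∈ ((G.nd {i} \ K) \ G.fa K) \ G.mo {i} → I {i} {j} ((G.nd {i} \ K) \ {j})) ∧
    (j ∈ ((G.nd {i} \ {i}) \ G.fa {i}) \ G.mo K → I {i} {j} (G.nd {i} \ {i, j}))

/-- The local Markov property (L1)–(L2) with respect to `G`. -/
def localMP (I : Finset V → Finset V → Finset V → Prop) : Prop :=
  ∀ K ∈ G.ccs, ∀ i ∈ K,
    I {i} (((G.nd {i} \ K) \ G.fa K) \ G.mo {i}) (G.fa K ∪ G.mo {i}) ∧
    I {i} ((((G.nd {i} \ {i}) \ G.pa {i}) \ G.nb {i}) \ G.mo (G.nb {i}))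
      (G.pa {i} ∪ G.nb {i} ∪ G.mo (G.nb {i}))

/-- The subgraph `G^U`: it keeps the edge `A ⊸ B` (with its type and orientation) iff `G`
has a route `A ⊸ B ⊸ ⋯ ⊸ C` with `C ∈ U`, all edges undirected or directed in the
direction of travel, and no subroute `R ⇢ S − T`. -/
def goodFrom (U : Finset V) (a b : V) : Prop :=
  ∃ (f : ℕ → V) (n : ℕ), 1 ≤ n ∧ f 0 = a ∧ f 1 = b ∧ f n ∈ U ∧
    (∀ i < n, G.fwd (f i) (f (i + 1))) ∧
    ∀ i, i + 2 ≤ n → ¬ (G.dashed (f i) (f (i + 1)) ∧ G.und (f (i + 1)) (f (i + 2)))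

/-- The graph `G^U`. -/
def derived (U : Finset V) : PreGraph V where
  undir a b := G.undir a b ∧ G.goodFrom U a b
  solid a b := G.solid a b ∧ G.goodFrom U a b
  dashed a b := G.dashed a b ∧ G.goodFrom U a b

/-- The set `Y'` used in Lemmas 2 and 3:
`Y' = {B' ∈ V(G^{X∪Y∪Z}) ∖ (X ∪ Z) : X ⊥_{G^{X∪Y∪Z}} B' | Z}`. -/
def derivedYp (X Y Z : Finset V) : Finset V :=
  ((G.derived (X ∪ Y ∪ Z)).verts \ (X ∪ Z)).filter fun b =>
    (G.derived (X ∪ Y ∪ Z)).Sep X {b} Z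

/-- The set `X' = V(G^{X∪Y∪Z}) ∖ (Y' ∪ Z)` used in Lemmas 2 and 3. -/
def derivedXp (X Y Z : Finset V) : Finset V :=
  (G.derived (X ∪ Y ∪ Z)).verts \ (G.derivedYp X Y Z ∪ Z)

end Finite

end PreGraph

/-- A chain graph: at most one edge between any pair of distinct nodes (undirected, solid
directed, or dashed directed) and no semidirected cycles. -/
structure ChainGraph (V : Type*) extends PreGraph V where
  undir_symm : ∀ a b, toPreGraph.undir a b → toPreGraph.undir b a
  undir_irrefl : ∀ a, ¬ toPreGraph.undir a a
  solid_irrefl : ∀ a, ¬ toPreGraph.solid a a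
  dashed_irrefl : ∀ a, ¬ toPreGraph.dashed a a
  undir_not_solid : ∀ a b, toPreGraph.undir a b → ¬ toPreGraph.solid a b
  undir_not_dashed : ∀ a b, toPreGraph.undir a b → ¬ toPreGraph.dashed a b
  solid_not_solid : ∀ a b, toPreGraph.solid a b → ¬ toPreGraph.solid b a
  solid_not_dashed : ∀ a b, toPreGraph.solid a b → ¬ toPreGraph.dashed a b
  solid_not_dashed_rev : ∀ a b, toPreGraph.solid a b → ¬ toPreGraph.dashed b a
  dashed_not_dashed : ∀ a b, toPreGraph.dashed a b → ¬ toPreGraph.dashed b a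
  no_semidirected_cycle : ¬ ∃ (f : ℕ → V) (n : ℕ), 1 ≤ n ∧ f n = f 0 ∧
    (toPreGraph.solid (f 0) (f 1) ∨ toPreGraph.dashed (f 0) (f 1)) ∧
    ∀ i < n, toPreGraph.fwd (f i) (f (i + 1))

namespace ChainGraph

variable (G : ChainGraph V)

/-- An LWF chain graph: no dashed directed edges. -/
def IsLWF : Prop := ∀ a b, ¬ G.toPreGraph.dashed a b

/-- An AMP chain graph: no solid directed edges. -/
def IsAMP : Prop := ∀ a b, ¬ G.toPreGraph.solid a b

/-- A unified chain graph: `Fa(K) ∩ Mo(K) = ∅` for every chain component `K`. -/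
def IsUCG [Fintype V] [DecidableEq V] : Prop :=
  ∀ K ∈ G.toPreGraph.ccs, Disjoint (G.toPreGraph.fa K) (G.toPreGraph.mo K)

end ChainGraph


/-- The AMP chain graph obtained from `G` by deleting every solid directed edge. -/
def ChainGraph.dropSolid (G : ChainGraph V) : ChainGraph V where
  undir := G.toPreGraph.undir
  solid _ _ := False
  dashed := G.toPreGraph.dashed
  undir_symm := G.undir_symm
  undir_irrefl := G.undir_irrefl
  solid_irrefl _ h := h
  dashed_irrefl := G.dashed_irrefl
  undir_not_solid _ _ _ h := h
  undir_not_dashed := G.undir_not_dashed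
  solid_not_solid _ _ h := h.elim
  solid_not_dashed _ _ h := h.elim
  solid_not_dashed_rev _ _ h := h.elim
  dashed_not_dashed := G.dashed_not_dashed
  no_semidirected_cycle := fun ⟨f, n, hn, hcyc, hstart, hsteps⟩ =>
    G.no_semidirected_cycle ⟨f, n, hn, hcyc, Or.inr (hstart.resolve_left id),
      fun i hi => (hsteps i hi).imp id (Or.imp False.elim id)⟩

/-- The restriction of `ω : V → ℝ` to the coordinates in `S`. -/
def marg (S : Finset V) : (V → ℝ) → (S → ℝ) := fun ω s => ω s.1

lemma marg_measurable (S : Finset V) : Measurable (marg (V := V) S) :=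
  measurable_pi_lambda _ fun s => measurable_pi_apply s.1

/-- Conditional independence of the coordinate tuples indexed by `X` and `Y` given the
coordinate tuple indexed by `Z`, for a distribution `μ` on `ℝ^V`. -/
def mCI [Fintype V] (μ : Measure (V → ℝ)) [IsFiniteMeasure μ] (X Y Z : Finset V) : Prop :=
  CondIndepFun (MeasurableSpace.comap (marg Z) inferInstance) ((marg_measurable Z).comap_le)
    (marg X) (marg Y) μ

/-- A probability distribution `μ` on `ℝ^V` satisfies the global Markov property with
respect to `G`. -/
def measGlobalMarkov [Fintype V] [DecidableEq V] (G : PreGraph V) (μ : Measure (V → ℝ))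
    [IsFiniteMeasure μ] : Prop :=
  ∀ X Y Z : Finset V, PDisj X Y Z → G.Sep X Y Z → mCI μ X Y Z

/-- A graphoid over `V`: a ternary relation on pairwise disjoint subsets of `V` satisfying
symmetry, decomposition, weak union, contraction and intersection. -/
structure Graphoid (V : Type*) [DecidableEq V] where
  rel : Finset V → Finset V → Finset V → Prop
  symmetry : ∀ X Y Z : Finset V, PDisj X Y Z → rel X Y Z → rel Y X Z
  decomposition : ∀ X Y W Z : Finset V, PDisj4 X Y W Z → rel X (Y ∪ W) Z → rel X Y Z
  weakUnion : ∀ X Y W Z : Finset V, PDisj4 X Y W Z → rel X (Y ∪ W) Z → rel X Y (Z ∪ W)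
  contraction : ∀ X Y W Z : Finset V, PDisj4 X Y W Z →
    rel X Y (Z ∪ W) → rel X W Z → rel X (Y ∪ W) Z
  intersection : ∀ X Y W Z : Finset V, PDisj4 X Y W Z →
    rel X Y (Z ∪ W) → rel X W (Z ∪ Y) → rel X (Y ∪ W) Z

/-- The conditional variance `Σ_{a,a|B} = Σ_{a,a} − Σ_{a,B} (Σ_{B,B})⁻¹ Σ_{B,a}`. -/
def condVar [Fintype V] [DecidableEq V] (S : Matrix V V ℝ) (a : V) (B : Finset V) : ℝ :=
  S a a - ∑ b₁ : B, ∑ b₂ : B, S a b₁.1 * (msub S B B)⁻¹ b₁ b₂ * S b₂.1 a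

/-!
Cut a route `ρ` at its collider blocks, that is, its collider sections and collider nodes. Give
each of the remaining stretches its own independent fair bit, and let a block carry the sum of the
two adjacent bits. The random vector whose coordinate at `v` records what `ρ` carries at each of
its visits to `v` is globally Markov: if `S` separates `A` from `B`, two outcomes that agree on `S`
can be recombined along the bits tied to `A` given `S`, because a tie from `A` to `B` would make
the part of `ρ` between them `S`-open. If `ρ` itself is `S`-open, then all its bits are equal once
it carries `0` at each of its visits to `S`, so its ends are dependent given `S`. Hence the
separations of a graph are the conditional independences common to all its Markov distributions.
-/

section ConditionalIndependence

variable {Ω β γ δ : Type*} [MeasurableSpace Ω] [MeasurableSpace β] [MeasurableSpace γ]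
  [MeasurableSpace δ]

lemma condExp_comap_eq_cond_real [MeasurableSingletonClass δ] {μ : Measure Ω} [IsFiniteMeasure μ]
    {h : Ω → δ} (hh : Measurable h) {s : Set Ω} (hs : MeasurableSet s) {x : Ω}
    (hx : μ (h ⁻¹' {h x}) ≠ 0) :
    (μ⟦s | MeasurableSpace.comap h inferInstance⟧) x = μ[|h ⁻¹' {h x}].real s := by
  have hfiber : MeasurableSet (h ⁻¹' {h x}) := hh (measurableSet_singleton _)
  have h_const : ∀ y ∈ h ⁻¹' {h x}, (μ⟦s | MeasurableSpace.comap h inferInstance⟧) y =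
      (μ⟦s | MeasurableSpace.comap h inferInstance⟧) x :=
    fun y hy => stronglyMeasurable_condExp.factorsThrough hy
  have h_int := setIntegral_condExp hh.comap_le (μ := μ) (f := s.indicator fun _ => (1 : ℝ))
    ((integrable_const _).indicator hs) ⟨{h x}, measurableSet_singleton _, rfl⟩
  rw [setIntegral_congr_fun hfiber h_const, setIntegral_const, setIntegral_indicator hs,
    setIntegral_const, smul_eq_mul, smul_eq_mul, mul_one] at h_int
  rw [measureReal_def, cond_apply hfiber, ENNReal.toReal_mul, ENNReal.toReal_inv,
    ← measureReal_def, ← measureReal_def, ← h_int,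
    inv_mul_cancel_left₀ ((measureReal_ne_zero_iff).2 hx)]

lemma indepFun_iff_measureReal_inter_preimage_eq_mul {μ : Measure Ω} [IsFiniteMeasure μ]
    {f : Ω → β} {g : Ω → γ} :
    IndepFun f g μ ↔ ∀ s t, MeasurableSet s → MeasurableSet t →
      μ.real (f ⁻¹' s ∩ g ⁻¹' t) = μ.real (f ⁻¹' s) * μ.real (g ⁻¹' t) := by
  simp only [indepFun_iff_measure_inter_preimage_eq_mul, measureReal_def, ← ENNReal.toReal_mul]
  refine forall₄_congr fun s t _ _ => (ENNReal.toReal_eq_toReal_iff' ?_ ?_).symm <;> finiteness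

lemma condIndepFun_comap_iff_forall_indepFun_cond [StandardBorelSpace Ω]
    [MeasurableSingletonClass δ] {μ : Measure Ω} [IsFiniteMeasure μ] {f : Ω → β} {g : Ω → γ}
    {h : Ω → δ} (hf : Measurable f) (hg : Measurable g) (hh : Measurable h)
    (h_atomic : ∀ᵐ x ∂μ, μ (h ⁻¹' {h x}) ≠ 0) :
    CondIndepFun (MeasurableSpace.comap h inferInstance) hh.comap_le f g μ ↔
      ∀ z, IndepFun f g μ[|h ⁻¹' {z}] := by
  rw [condIndepFun_iff_condExp_inter_preimage_eq_mul hf hg]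
  simp only [indepFun_iff_measureReal_inter_preimage_eq_mul]
  constructor
  · intro h_prod z s t hs ht
    by_cases hz : μ (h ⁻¹' {z}) = 0
    · simp [cond_eq_zero_of_meas_eq_zero hz]
    obtain ⟨x, rfl, hx⟩ :=
      ((frequently_ae_mem_iff.2 hz).and_eventually (h_prod s t hs ht)).exists
    dsimp only at hx
    rwa [condExp_comap_eq_cond_real hh ((hf hs).inter (hg ht)) hz,
      condExp_comap_eq_cond_real hh (hf hs) hz, condExp_comap_eq_cond_real hh (hg ht) hz] at hx
  · intro h_indep s t hs ht
    filter_upwards [h_atomic] with x hx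
    rw [condExp_comap_eq_cond_real hh ((hf hs).inter (hg ht)) hx,
      condExp_comap_eq_cond_real hh (hf hs) hx, condExp_comap_eq_cond_real hh (hg ht) hx]
    exact h_indep (h x) s t hs ht

lemma cond_map {ν : Measure Ω} {X : Ω → δ} (hX : Measurable X) {s : Set δ}
    (hs : MeasurableSet s) : (ν.map X)[|s] = ν[|X ⁻¹' s].map X := by
  rw [ProbabilityTheory.cond, ProbabilityTheory.cond, Measure.restrict_map hX hs,
    Measure.map_apply hX hs, Measure.map_smul]

lemma indepFun_map_iff {ν : Measure Ω} {X : Ω → δ} {f : δ → β} {g : δ → γ} (hX : Measurable X)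
    (hf : Measurable f) (hg : Measurable g) :
    IndepFun f g (ν.map X) ↔ IndepFun (f ∘ X) (g ∘ X) ν := by
  simp only [indepFun_iff_measure_inter_preimage_eq_mul]
  refine forall₄_congr fun s t hs ht => ?_
  rw [Measure.map_apply hX ((hf hs).inter (hg ht)), Measure.map_apply hX (hf hs),
    Measure.map_apply hX (hg ht)]
  rfl

end ConditionalIndependence

section UniformLaw

variable {Ω β γ : Type*} [MeasurableSpace Ω] [DiscreteMeasurableSpace Ω] [MeasurableSpace β]
  [MeasurableSpace γ] {f : Ω → β} {g : Ω → γ} {s : Set Ω}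

lemma uniformOn_real_apply (hs : s.Finite) (t : Set Ω) :
    (uniformOn s).real t = (s ∩ t).ncard / s.ncard := by
  rw [measureReal_def, uniformOn, cond_apply .of_discrete, Measure.count_apply .of_discrete,
    Measure.count_apply .of_discrete, ← hs.cast_ncard_eq, ← (hs.inter_of_left t).cast_ncard_eq]
  simp [div_eq_inv_mul]

/-- Recombining two outcomes is an involution of `s ×ˢ s` that matches the two sides of the
product rule. -/
lemma indepFun_uniformOn_of_recombination (hs : s.Finite) (mix : Ω → Ω → Ω)
    (mix_mix : ∀ ω ω', mix (mix ω ω') (mix ω' ω) = ω)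
    (h_mix : ∀ ω ∈ s, ∀ ω' ∈ s,
      mix ω ω' ∈ s ∧ f (mix ω ω') = f ω ∧ g (mix ω ω') = g ω') :
    IndepFun f g (uniformOn s) := by
  obtain rfl | hne := s.eq_empty_or_nonempty
  · simp [indepFun_iff_measure_inter_preimage_eq_mul]
  have := isProbabilityMeasure_uniformOn hs hne
  refine indepFun_iff_measureReal_inter_preimage_eq_mul.2 fun t u _ _ => ?_
  have h_card : (s ∩ (f ⁻¹' t ∩ g ⁻¹' u)).ncard * s.ncard =
      (s ∩ f ⁻¹' t).ncard * (s ∩ g ⁻¹' u).ncard := by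
    rw [← Set.ncard_prod, ← Set.ncard_prod]
    refine Set.BijOn.ncard_eq (f := fun p : Ω × Ω => (mix p.1 p.2, mix p.2 p.1))
      (Set.InvOn.bijOn (f' := fun p : Ω × Ω => (mix p.1 p.2, mix p.2 p.1)) ?_ ?_ ?_)
    · exact ⟨fun p _ => by simp [mix_mix], fun p _ => by simp [mix_mix]⟩
    · rintro ⟨ω, ω'⟩ ⟨⟨hω, hf, hg⟩, hω'⟩
      obtain ⟨h_mem, h_left, -⟩ := h_mix ω hω ω' hω'
      obtain ⟨h_mem', -, h_right⟩ := h_mix ω' hω' ω hω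
      exact ⟨⟨h_mem, by rwa [Set.mem_preimage, h_left]⟩,
        h_mem', by rwa [Set.mem_preimage, h_right]⟩
    · rintro ⟨ω, ω'⟩ ⟨⟨hω, hf⟩, hω', hg⟩
      obtain ⟨h_mem, h_left, h_right⟩ := h_mix ω hω ω' hω'
      exact ⟨⟨h_mem, by rwa [Set.mem_preimage, h_left], by rwa [Set.mem_preimage, h_right]⟩,
        (h_mix ω' hω' ω hω).1⟩
  have h_pos : (s.ncard : ℝ) ≠ 0 := Nat.cast_ne_zero.2 ((Set.ncard_pos hs).2 hne).ne'
  simp only [uniformOn_real_apply hs]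
  field_simp
  exact_mod_cast h_card

lemma exists_recombination_of_indepFun_uniformOn [MeasurableSingletonClass β]
    [MeasurableSingletonClass γ] (hs : s.Finite) (h_indep : IndepFun f g (uniformOn s))
    {ω ω' : Ω} (hω : ω ∈ s) (hω' : ω' ∈ s) : ∃ ω'' ∈ s, f ω'' = f ω ∧ g ω'' = g ω' := by
  by_contra! h_none
  have h_zero : uniformOn s (f ⁻¹' {f ω} ∩ g ⁻¹' {g ω'}) = 0 :=
    (uniformOn_eq_zero_iff hs).2 (Set.eq_empty_of_forall_notMem fun _ h => h_none _ h.1 h.2.1 h.2.2)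
  rw [h_indep.measure_inter_preimage_eq_mul _ _ (measurableSet_singleton _)
    (measurableSet_singleton _), mul_eq_zero, uniformOn_eq_zero_iff hs,
    uniformOn_eq_zero_iff hs] at h_zero
  exact h_zero.elim (fun h => h.le ⟨hω, rfl⟩) fun h => h.le ⟨hω', rfl⟩

variable [Finite Ω]

lemma uniformOn_univ_cond (s : Set Ω) : (uniformOn Set.univ)[|s] = uniformOn s := by
  rw [uniformOn, cond_cond_eq_cond_inter' .univ .of_discrete, Set.univ_inter, uniformOn]
  exact Measure.count_apply_lt_top.2 (Set.toFinite _) |>.ne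

lemma mCI_map_uniformOn_iff [Nonempty Ω] [Fintype V] (X : Ω → V → ℝ) (A B S : Finset V) :
    mCI ((uniformOn Set.univ).map X) A B S ↔
      ∀ z, IndepFun (marg A ∘ X) (marg B ∘ X) (uniformOn {ω | marg S (X ω) = z}) := by
  have hX : Measurable X := .of_discrete
  have h_atomic : ∀ᵐ x ∂(uniformOn Set.univ).map X,
      (uniformOn Set.univ).map X (marg S ⁻¹' {marg S x}) ≠ 0 := by
    filter_upwards [ae_map_mem_range X (Set.finite_range X).measurableSet _]
    rintro _ ⟨ω, rfl⟩
    rw [Measure.map_apply hX (marg_measurable S (measurableSet_singleton _)), Ne,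
      uniformOn_eq_zero_iff Set.finite_univ, Set.univ_inter]
    exact Set.Nonempty.ne_empty ⟨ω, rfl⟩
  rw [mCI, condIndepFun_comap_iff_forall_indepFun_cond (marg_measurable A) (marg_measurable B)
    (marg_measurable S) h_atomic]
  refine forall_congr' fun z => ?_
  rw [cond_map hX (marg_measurable S (measurableSet_singleton z)), uniformOn_univ_cond,
    indepFun_map_iff hX (marg_measurable A) (marg_measurable B)]
  rfl

lemma mCI_map_uniformOn_of_recombination [Nonempty Ω] [Fintype V] (X : Ω → V → ℝ)
    {A B S : Finset V} (mix : Ω → Ω → Ω) (mix_mix : ∀ ω ω', mix (mix ω ω') (mix ω' ω) = ω)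
    (h_mix : ∀ ω ω', marg S (X ω) = marg S (X ω') → marg S (X (mix ω ω')) = marg S (X ω) ∧
      marg A (X (mix ω ω')) = marg A (X ω) ∧ marg B (X (mix ω ω')) = marg B (X ω')) :
    mCI ((uniformOn Set.univ).map X) A B S := by
  refine (mCI_map_uniformOn_iff X A B S).2 fun z => ?_
  refine indepFun_uniformOn_of_recombination (Set.toFinite _) mix mix_mix fun ω hω ω' hω' => ?_
  obtain ⟨hS, hA, hB⟩ := h_mix ω ω' (hω.trans hω'.symm)
  exact ⟨hS.trans hω, hA, hB⟩

lemma exists_recombination_of_mCI_map_uniformOn [Nonempty Ω] [Fintype V] {X : Ω → V → ℝ}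
    {A B S : Finset V} (h : mCI ((uniformOn Set.univ).map X) A B S) {ω ω' : Ω}
    (hS : marg S (X ω) = marg S (X ω')) :
    ∃ ω'', marg S (X ω'') = marg S (X ω') ∧ marg A (X ω'') = marg A (X ω) ∧
      marg B (X ω'') = marg B (X ω') :=
  exists_recombination_of_indepFun_uniformOn (Set.toFinite _)
    ((mCI_map_uniformOn_iff X A B S).1 h (marg S (X ω'))) hS rfl

end UniformLaw

namespace PreGraph

/-- No two edges of `G` join the same ordered pair of nodes, an undirected edge joining both
ordered pairs. This is all that is needed of a chain graph; opposite directed edges and semidirected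
cycles are allowed. -/
structure NoParallelEdges (G : PreGraph V) : Prop where
  not_solid_of_und {a b : V} : G.und a b → ¬ G.solid a b
  not_dashed_of_und {a b : V} : G.und a b → ¬ G.dashed a b
  not_dashed_of_solid {a b : V} : G.solid a b → ¬ G.dashed a b

lemma und_comm {G : PreGraph V} {a b : V} : G.und a b ↔ G.und b a := or_comm

namespace Route

variable {G : PreGraph V} (ρ : G.Route)

section ColliderBlock

/-- The positions `p, …, q` of `ρ` form a collider section, or are a single collider node. -/
def IsColliderBlock (p q : ℕ) : Prop :=
  ρ.colliderSectionOcc p q ∨ p = q ∧ ρ.colliderNodeAt p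

/-- The position `k` of `ρ` lies in a collider block. -/
def InColliderBlock (k : ℕ) : Prop := ∃ p q, ρ.IsColliderBlock p q ∧ p ≤ k ∧ k ≤ q

variable {ρ} {p q p' q' k : ℕ}

lemma IsColliderBlock.one_le (h : ρ.IsColliderBlock p q) : 1 ≤ p := by
  rcases h with h | ⟨-, h⟩ <;> exact h.1

lemma IsColliderBlock.le (h : ρ.IsColliderBlock p q) : p ≤ q := by
  rcases h with h | ⟨rfl, -⟩
  exacts [h.2.1, le_rfl]

lemma IsColliderBlock.lt_len (h : ρ.IsColliderBlock p q) : q < ρ.len := by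
  rcases h with h | ⟨rfl, h⟩
  exacts [h.2.2.1, h.2.1]

lemma IsColliderBlock.inColliderBlock (h : ρ.IsColliderBlock p q) (hp : p ≤ k) (hq : k ≤ q) :
    ρ.InColliderBlock k := ⟨p, q, h, hp, hq⟩

lemma not_inColliderBlock_zero : ¬ ρ.InColliderBlock 0 := fun ⟨_, _, h, hp, _⟩ =>
  absurd (h.one_le.trans hp) (by simp)

lemma not_inColliderBlock_len : ¬ ρ.InColliderBlock ρ.len := fun ⟨_, _, h, _, hq⟩ =>
  absurd h.lt_len hq.not_gt

lemma inColliderBlock_iff :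
    ρ.InColliderBlock k ↔ ρ.colliderNodeAt k ∨ ρ.inColliderSectionAt k := by
  constructor
  · rintro ⟨p, q, h | ⟨rfl, h⟩, hp, hq⟩
    · exact .inr ⟨p, q, h, hp, hq⟩
    · exact .inl (le_antisymm hp hq ▸ h)
  · rintro (h | ⟨p, q, h, hp, hq⟩)
    · exact ⟨k, k, .inr ⟨rfl, h⟩, le_rfl, le_rfl⟩
    · exact ⟨p, q, .inl h, hp, hq⟩

lemma isZOpen_iff {Z : Finset V} :
    ρ.IsZOpen Z ↔ (∀ p q, ρ.IsColliderBlock p q → ∃ m, p ≤ m ∧ m ≤ q ∧ ρ.nodes m ∈ Z) ∧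
      ∀ k ≤ ρ.len, ¬ ρ.InColliderBlock k → ρ.nodes k ∉ Z := by
  simp only [inColliderBlock_iff, not_or, and_imp]
  constructor
  · rintro ⟨h_node, h_section, h_other⟩
    refine ⟨?_, h_other⟩
    rintro p q (h | ⟨rfl, h⟩)
    exacts [h_section p q h, ⟨p, le_rfl, le_rfl, h_node p h⟩]
  · rintro ⟨h_block, h_other⟩
    refine ⟨fun k hk => ?_, fun p q h => h_block p q (.inl h), h_other⟩
    obtain ⟨m, hkm, hmk, hm⟩ := h_block k k (.inr ⟨rfl, hk⟩)
    rwa [le_antisymm hkm hmk]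

lemma colliderSectionOcc_start_eq (hG : G.NoParallelEdges) (h : ρ.colliderSectionOcc p q)
    (h' : ρ.colliderSectionOcc p' q') (hp : p ≤ p') (hq : p' ≤ q) : p = p' := by
  obtain ⟨-, -, -, h_und, -, -⟩ := h
  obtain ⟨h_one, -, -, -, h_solid, -⟩ := h'
  by_contra h_ne
  have h_und_last := h_und (p' - 1) (by omega) (by omega)
  rw [Nat.sub_add_cancel h_one] at h_und_last
  exact hG.not_solid_of_und h_und_last h_solid

lemma colliderSectionOcc_end_eq (hG : G.NoParallelEdges) (h : ρ.colliderSectionOcc p q)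
    (h' : ρ.colliderSectionOcc p' q') (hp : p ≤ q') (hq : q' ≤ q) : q' = q := by
  obtain ⟨-, -, -, h_und, -, -⟩ := h
  obtain ⟨-, -, -, -, -, h_solid⟩ := h'
  by_contra h_ne
  exact hG.not_solid_of_und (und_comm.1 (h_und q' hp (by omega))) h_solid

lemma colliderNodeAt.not_inColliderSectionAt (hG : G.NoParallelEdges) (h : ρ.colliderNodeAt k) :
    ¬ ρ.inColliderSectionAt k := by
  rintro ⟨p, q, ⟨h_one, -, -, h_und, h_left, h_right⟩, hp, hq⟩
  have not_dashed_left : ¬ G.dashed (ρ.nodes (k - 1)) (ρ.nodes k) := by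
    obtain rfl | hlt := hp.eq_or_lt
    · exact hG.not_dashed_of_solid h_left
    · have h_und_pred := h_und (k - 1) (by omega) (by omega)
      rw [Nat.sub_add_cancel (by omega)] at h_und_pred
      exact hG.not_dashed_of_und h_und_pred
  have not_dashed_right : ¬ G.dashed (ρ.nodes (k + 1)) (ρ.nodes k) := by
    obtain rfl | hlt := hq.eq_or_lt
    · exact hG.not_dashed_of_solid h_right
    · exact hG.not_dashed_of_und (und_comm.1 (h_und k hp hlt))
  simpa [colliderTriple, not_dashed_left, not_dashed_right] using h.2.2

lemma IsColliderBlock.eq (hG : G.NoParallelEdges) (h : ρ.IsColliderBlock p q)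
    (h' : ρ.IsColliderBlock p' q') (hp : p ≤ k) (hq : k ≤ q) (hp' : p' ≤ k) (hq' : k ≤ q') :
    p = p' ∧ q = q' := by
  rcases h with h | ⟨rfl, h⟩ <;> rcases h' with h' | ⟨rfl, h'⟩
  · have h_start : p = p' := by
      rcases le_total p p' with hle | hle
      · exact colliderSectionOcc_start_eq hG h h' hle (hp'.trans hq)
      · exact (colliderSectionOcc_start_eq hG h' h hle (hp.trans hq')).symm
    have h_end : q = q' := by
      rcases le_total q q' with hle | hle
      · exact colliderSectionOcc_end_eq hG h' h (hp'.trans hq) hle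
      · exact (colliderSectionOcc_end_eq hG h h' (hp.trans hq') hle).symm
    exact ⟨h_start, h_end⟩
  · exact absurd ⟨p, q, h, by omega, by omega⟩ (h'.not_inColliderSectionAt hG)
  · exact absurd ⟨p', q', h', by omega, by omega⟩ (h.not_inColliderSectionAt hG)
  · omega

/-- The subroute of `ρ` between the positions `p` and `q`. -/
def sub (ρ : G.Route) (p q : ℕ) (hq : q ≤ ρ.len) : G.Route where
  len := q - p
  nodes k := ρ.nodes (p + k)
  adj_step i hi := ρ.adj_step (p + i) (by omega)

lemma sub_colliderSectionOcc_iff (hq : q ≤ ρ.len) {a c : ℕ} :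
    (ρ.sub p q hq).colliderSectionOcc a c ↔
      1 ≤ a ∧ p + c + 1 ≤ q ∧ ρ.colliderSectionOcc (p + a) (p + c) := by
  simp only [colliderSectionOcc, sub]
  constructor
  · rintro ⟨h_one, h_le, h_len, h_und, h_left, h_right⟩
    refine ⟨h_one, by omega, by omega, by omega, by omega, fun m hm hm' => ?_, ?_, h_right⟩
    · have := h_und (m - p) (by omega) (by omega)
      rwa [← Nat.add_assoc, Nat.add_sub_cancel' (by omega)] at this
    · rwa [← Nat.add_sub_assoc h_one] at h_left
  · rintro ⟨h_one, h_len, -, h_le, -, h_und, h_left, h_right⟩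
    refine ⟨h_one, by omega, by omega, fun m hm hm' => h_und (p + m) (by omega) (by omega), ?_,
      h_right⟩
    rwa [Nat.add_sub_assoc h_one] at h_left

lemma sub_colliderNodeAt_iff (hq : q ≤ ρ.len) {a : ℕ} :
    (ρ.sub p q hq).colliderNodeAt a ↔ 1 ≤ a ∧ p + a + 1 ≤ q ∧ ρ.colliderNodeAt (p + a) := by
  simp only [colliderNodeAt, sub]
  constructor
  · rintro ⟨h_one, h_len, h⟩
    exact ⟨h_one, by omega, by omega, by omega, by rwa [Nat.add_sub_assoc h_one]⟩
  · rintro ⟨h_one, h_len, -, -, h⟩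
    exact ⟨h_one, by omega, by rwa [Nat.add_sub_assoc h_one] at h⟩

lemma sub_isColliderBlock_iff (hq : q ≤ ρ.len) {a c : ℕ} :
    (ρ.sub p q hq).IsColliderBlock a c ↔
      1 ≤ a ∧ p + c + 1 ≤ q ∧ ρ.IsColliderBlock (p + a) (p + c) := by
  simp only [IsColliderBlock, sub_colliderSectionOcc_iff, sub_colliderNodeAt_iff,
    Nat.add_left_cancel_iff]
  constructor
  · rintro (⟨h_one, h_len, h⟩ | ⟨rfl, h_one, h_len, h⟩)
    exacts [⟨h_one, h_len, .inl h⟩, ⟨h_one, h_len, .inr ⟨rfl, h⟩⟩]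
  · rintro ⟨h_one, h_len, h | ⟨rfl, h⟩⟩
    exacts [.inl ⟨h_one, h_len, h⟩, .inr ⟨rfl, h_one, h_len, h⟩]

end ColliderBlock

section Signal

/-- The number of collider blocks of `ρ` that end strictly before position `k`: the index of the
bit carried by position `k`, or of the first of its two bits if `k` lies in a block. -/
def bitIndex (k : ℕ) : ℕ := Nat.count (fun q => ∃ p, ρ.IsColliderBlock p q) k

/-- The indices of the bits whose sum is the signal at position `k`. Each stretch of `ρ` between
consecutive collider blocks has its own bit; a block carries the sum of the two adjacent bits. -/
def bits (k : ℕ) : Finset ℕ :=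
  if ρ.InColliderBlock k then {ρ.bitIndex k, ρ.bitIndex k + 1} else {ρ.bitIndex k}

/-- The signal that the bits `ω` induce at position `k` of `ρ`. -/
def signal {M : Type*} [AddCommMonoid M] (ω : ℕ → M) (k : ℕ) : M := ∑ i ∈ ρ.bits k, ω i

lemma bitIndex_zero : ρ.bitIndex 0 = 0 := Nat.count_zero _

lemma bitIndex_mono : Monotone ρ.bitIndex := Nat.count_monotone _

lemma bitIndex_le (k : ℕ) : ρ.bitIndex k ≤ k := Nat.count_le _

variable {ρ} {p q k m i : ℕ}

lemma bits_of_inColliderBlock (h : ρ.InColliderBlock k) :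
    ρ.bits k = {ρ.bitIndex k, ρ.bitIndex k + 1} := if_pos h

lemma bits_of_not_inColliderBlock (h : ¬ ρ.InColliderBlock k) : ρ.bits k = {ρ.bitIndex k} :=
  if_neg h

lemma signal_of_inColliderBlock {M : Type*} [AddCommMonoid M] {ω : ℕ → M}
    (h : ρ.InColliderBlock k) : ρ.signal ω k = ω (ρ.bitIndex k) + ω (ρ.bitIndex k + 1) := by
  rw [signal, bits_of_inColliderBlock h, Finset.sum_pair (Nat.succ_ne_self _).symm]

lemma signal_of_not_inColliderBlock {M : Type*} [AddCommMonoid M] {ω : ℕ → M}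
    (h : ¬ ρ.InColliderBlock k) : ρ.signal ω k = ω (ρ.bitIndex k) := by
  rw [signal, bits_of_not_inColliderBlock h, Finset.sum_singleton]

lemma bitIndex_le_of_mem_bits (h : i ∈ ρ.bits k) : ρ.bitIndex k ≤ i := by
  by_cases hk : ρ.InColliderBlock k
  · rw [bits_of_inColliderBlock hk, Finset.mem_insert, Finset.mem_singleton] at h
    omega
  · rw [bits_of_not_inColliderBlock hk, Finset.mem_singleton] at h
    omega

lemma IsColliderBlock.bitIndex_end_succ (h : ρ.IsColliderBlock p q) :
    ρ.bitIndex (q + 1) = ρ.bitIndex q + 1 := by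
  rw [bitIndex, Nat.count_succ, if_pos ⟨p, h⟩, bitIndex]

lemma bitIndex_succ_of_not_end (h : ¬ ∃ p, ρ.IsColliderBlock p k) :
    ρ.bitIndex (k + 1) = ρ.bitIndex k := by
  rw [bitIndex, Nat.count_succ, if_neg h, Nat.add_zero, bitIndex]

lemma IsColliderBlock.bitIndex_eq (hG : G.NoParallelEdges) (h : ρ.IsColliderBlock p q)
    (hp : p ≤ k) (hq : k ≤ q) : ρ.bitIndex k = ρ.bitIndex p := by
  induction k, hp using Nat.le_induction with
  | base => rfl
  | succ k hp ih =>
    rw [bitIndex_succ_of_not_end, ih (by omega)]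
    rintro ⟨p', h'⟩
    have := (h.eq hG h' hp (by omega) h'.le le_rfl).2
    omega

lemma IsColliderBlock.bitIndex_lt (hG : G.NoParallelEdges) (h : ρ.IsColliderBlock p q)
    (hp : p ≤ k) (hk : k ≤ q) (hm : q < m) : ρ.bitIndex k < ρ.bitIndex m := by
  have h_end := ρ.bitIndex_mono (Nat.succ_le_of_lt hm)
  rw [Nat.succ_eq_add_one, h.bitIndex_end_succ, h.bitIndex_eq hG h.le le_rfl,
    ← h.bitIndex_eq hG hp hk] at h_end
  exact h_end

lemma IsColliderBlock.mem_of_bitIndex_eq (hG : G.NoParallelEdges) (h : ρ.IsColliderBlock p q)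
    (hk : ρ.InColliderBlock k) (h_eq : ρ.bitIndex k = ρ.bitIndex p) : p ≤ k ∧ k ≤ q := by
  obtain ⟨p', q', h', hp', hq'⟩ := hk
  constructor
  · by_contra! hlt
    by_cases hlt' : q' < p
    · exact (h'.bitIndex_lt hG hp' hq' hlt').ne h_eq
    · have := (h.eq hG h' le_rfl h.le (by omega) (by omega)).1
      omega
  · by_contra! hlt
    exact (h.bitIndex_lt hG le_rfl h.le hlt).ne' h_eq

lemma IsColliderBlock.bits_eq (hG : G.NoParallelEdges) (h : ρ.IsColliderBlock p q) (hp : p ≤ k)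
    (hq : k ≤ q) (hp' : p ≤ m) (hq' : m ≤ q) : ρ.bits k = ρ.bits m := by
  rw [bits_of_inColliderBlock (h.inColliderBlock hp hq),
    bits_of_inColliderBlock (h.inColliderBlock hp' hq'), h.bitIndex_eq hG hp hq,
    h.bitIndex_eq hG hp' hq']

lemma inColliderBlock_and_bitIndex_eq_of_bits_eq_pair (h : ρ.bits k = {i, i + 1}) :
    ρ.InColliderBlock k ∧ ρ.bitIndex k = i := by
  have hi : i ∈ ρ.bits k := by simp [h]
  have hi' : i + 1 ∈ ρ.bits k := by simp [h]
  by_cases hk : ρ.InColliderBlock k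
  · rw [bits_of_inColliderBlock hk, Finset.mem_insert, Finset.mem_singleton] at hi hi'
    exact ⟨hk, by omega⟩
  · rw [bits_of_not_inColliderBlock hk, Finset.mem_singleton] at hi hi'
    omega

lemma le_bitIndex_of_mem_bits (hG : G.NoParallelEdges) (hi : i ∈ ρ.bits p) (hpk : p ≤ k)
    (h_block : ∀ p' q', ρ.IsColliderBlock p' q' → p' ≤ p → p ≤ q' → q' < k) :
    i ≤ ρ.bitIndex k := by
  by_cases hp : ρ.InColliderBlock p
  · obtain ⟨p', q', h, hp', hq'⟩ := id hp
    have h_lt := h.bitIndex_lt hG hp' hq' (h_block p' q' h hp' hq')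
    rw [bits_of_inColliderBlock hp, Finset.mem_insert, Finset.mem_singleton] at hi
    omega
  · rw [bits_of_not_inColliderBlock hp, Finset.mem_singleton] at hi
    exact hi.trans_le (ρ.bitIndex_mono hpk)

end Signal

section Reveals

/-- The sum of the bits with index in `s` is the signal at some visit of `ρ` to `S`. -/
def Reveals (S : Finset V) (s : Finset ℕ) : Prop :=
  ∃ k ≤ ρ.len, ρ.nodes k ∈ S ∧ ρ.bits k = s

/-- The bits `i` and `j` determine each other given the signals at `S`, but neither of them is
determined by these signals: the sum of any two consecutive bits from `i` to `j` is revealed, and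
no single one of these bits is. This makes `i` linked to itself in all cases. -/
def Linked (S : Finset V) (i j : ℕ) : Prop :=
  ∀ t, min i j ≤ t → t < max i j →
    ¬ ρ.Reveals S {t} ∧ ¬ ρ.Reveals S {t + 1} ∧ ρ.Reveals S {t, t + 1}

/-- The signal at position `p` involves the bit `i`, and the signals at `S` reveal neither. -/
def Exposes (S : Finset V) (p i : ℕ) : Prop :=
  i ∈ ρ.bits p ∧ ¬ ρ.Reveals S (ρ.bits p) ∧ ¬ ρ.Reveals S {i}

/-- The bits that are linked, given the signals at `S`, to a bit exposed at a visit to `A`. -/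
def reach (A S : Finset V) : Set ℕ :=
  {i | ∃ p ≤ ρ.len, ρ.nodes p ∈ A ∧ ∃ j, ρ.Exposes S p j ∧ ρ.Linked S j i}

variable {ρ} {A B S : Finset V} {p q p' q' k i j : ℕ}

lemma Linked.refl (i : ℕ) : ρ.Linked S i i := fun t h h' => by omega

lemma Linked.symm (h : ρ.Linked S i j) : ρ.Linked S j i := fun t ht ht' =>
  h t (by omega) (by omega)

lemma Linked.trans (h : ρ.Linked S i j) (h' : ρ.Linked S j k) : ρ.Linked S i k := by
  intro t ht ht'
  by_cases htij : min i j ≤ t ∧ t < max i j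
  · exact h t htij.1 htij.2
  · exact h' t (by omega) (by omega)

lemma linked_succ (h : ¬ ρ.Reveals S {i}) (h' : ¬ ρ.Reveals S {i + 1})
    (h_sum : ρ.Reveals S {i, i + 1}) : ρ.Linked S i (i + 1) := by
  intro t ht ht'
  obtain rfl : t = i := by omega
  exact ⟨h, h', h_sum⟩

lemma Linked.mem_reach_iff (h : ρ.Linked S i j) : i ∈ ρ.reach A S ↔ j ∈ ρ.reach A S :=
  ⟨fun ⟨p, hp, hpA, t, ht, hti⟩ => ⟨p, hp, hpA, t, ht, hti.trans h⟩,
    fun ⟨p, hp, hpA, t, ht, htj⟩ => ⟨p, hp, hpA, t, ht, htj.trans h.symm⟩⟩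

lemma IsColliderBlock.exists_mem_of_linked (hG : G.NoParallelEdges) (h : ρ.IsColliderBlock p' q')
    (hi : i ∈ ρ.bits p) (hj : j ∈ ρ.bits q) (hij : ρ.Linked S i j) (hp : p < p') (hq : q' < q) :
    ∃ m, p' ≤ m ∧ m ≤ q' ∧ ρ.nodes m ∈ S := by
  have h_left : i ≤ ρ.bitIndex p' := by
    refine le_bitIndex_of_mem_bits hG hi hp.le fun a c hac ha _ => ?_
    by_contra! hc
    have := (hac.eq hG h (by omega) hc le_rfl h.le).1
    omega
  have h_right : ρ.bitIndex p' < j :=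
    (h.bitIndex_lt hG le_rfl h.le hq).trans_le (bitIndex_le_of_mem_bits hj)
  obtain ⟨-, -, k, -, hkS, hk⟩ := hij (ρ.bitIndex p') (by omega) (by omega)
  obtain ⟨hk_block, hk_eq⟩ := inColliderBlock_and_bitIndex_eq_of_bits_eq_pair hk
  obtain ⟨hpk, hkq⟩ := h.mem_of_bitIndex_eq hG hk_block hk_eq
  exact ⟨k, hpk, hkq, hkS⟩

lemma notMem_of_linked (hG : G.NoParallelEdges) (hi : i ∈ ρ.bits p) (hj : ρ.Exposes S q j)
    (hij : ρ.Linked S i j) (hk : ¬ ρ.InColliderBlock k) (hp : p ≤ k) (hq : k ≤ q)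
    (hk_len : k ≤ ρ.len) : ρ.nodes k ∉ S := by
  intro hkS
  have h_left : i ≤ ρ.bitIndex k := by
    refine le_bitIndex_of_mem_bits hG hi hp fun a c hac ha _ => ?_
    by_contra! hc
    exact hk (hac.inColliderBlock (ha.trans hp) hc)
  have h_right : ρ.bitIndex k ≤ j := (ρ.bitIndex_mono hq).trans (bitIndex_le_of_mem_bits hj.1)
  have h_reveals : ρ.Reveals S {ρ.bitIndex k} :=
    ⟨k, hk_len, hkS, bits_of_not_inColliderBlock hk⟩
  obtain h_eq | h_lt := h_right.eq_or_lt
  · exact hj.2.2 (h_eq ▸ h_reveals)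
  · exact (hij _ (by omega) (by omega)).1 h_reveals

lemma sub_isZOpen (hG : G.NoParallelEdges) (hpq : p ≤ q) (hq : q ≤ ρ.len)
    (hi : ρ.Exposes S p i) (hj : ρ.Exposes S q j) (hij : ρ.Linked S i j) :
    (ρ.sub p q hq).IsZOpen S := by
  refine isZOpen_iff.2 ⟨fun a c h => ?_, fun k hk h_out => ?_⟩
  · obtain ⟨ha, hc, h⟩ := (sub_isColliderBlock_iff hq).1 h
    obtain ⟨m, hm, hm', hmS⟩ :=
      h.exists_mem_of_linked hG hi.1 hj.1 hij (by omega) (by omega)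
    refine ⟨m - p, by omega, by omega, ?_⟩
    change ρ.nodes (p + (m - p)) ∈ S
    rwa [Nat.add_sub_cancel' (by omega)]
  · have hkq : k ≤ q - p := hk
    change ρ.nodes (p + k) ∉ S
    by_cases h : ρ.InColliderBlock (p + k)
    · obtain ⟨p', q', h, hp', hq'⟩ := h
      have h_end : p' ≤ p ∨ q ≤ q' := by
        by_contra! h_inner
        refine h_out ⟨p' - p, q' - p, (sub_isColliderBlock_iff hq).2
          ⟨by omega, by omega, ?_⟩, by omega, by omega⟩
        rwa [Nat.add_sub_cancel' (by omega), Nat.add_sub_cancel' (by omega)]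
      rcases h_end with h_start | h_end
      · exact fun hkS => hi.2.1 ⟨p + k, by omega, hkS,
          h.bits_eq hG hp' hq' h_start (by omega)⟩
      · exact fun hkS => hj.2.1 ⟨p + k, by omega, hkS,
          h.bits_eq hG hp' hq' (by omega) h_end⟩
    · exact notMem_of_linked hG hi.1 hj hij h (by omega) (by omega) (by omega)

lemma not_sep_of_exposes (hG : G.NoParallelEdges) (hp : p ≤ ρ.len) (hq : q ≤ ρ.len)
    (hpA : ρ.nodes p ∈ A) (hqB : ρ.nodes q ∈ B) (hi : ρ.Exposes S p i) (hj : ρ.Exposes S q j)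
    (hij : ρ.Linked S i j) : ¬ G.Sep A B S := by
  rw [Sep, not_not]
  rcases le_total p q with h | h
  · refine ⟨ρ.sub p q hq, .inl ⟨hpA, ?_⟩, sub_isZOpen hG h hq hi hj hij⟩
    change ρ.nodes (p + (q - p)) ∈ B
    rwa [Nat.add_sub_cancel' h]
  · refine ⟨ρ.sub q p hp, .inr ⟨hqB, ?_⟩, sub_isZOpen hG h hp hj hi hij.symm⟩
    change ρ.nodes (q + (p - q)) ∈ A
    rwa [Nat.add_sub_cancel' h]

lemma notMem_reach_of_exposes (hG : G.NoParallelEdges) (h_sep : G.Sep A B S) (hq : q ≤ ρ.len)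
    (hqB : ρ.nodes q ∈ B) (hi : ρ.Exposes S q i) : i ∉ ρ.reach A S :=
  fun ⟨_, hp, hpA, _, hj, hji⟩ => not_sep_of_exposes hG hp hq hpA hqB hj hi hji h_sep

end Reveals

section Recombination

variable {ρ} {M : Type*} [AddCancelCommMonoid M] {m ω ω' : ℕ → M} {A B S : Finset V} {k : ℕ}

lemma sum_eq_of_reveals {s : Finset ℕ}
    (hS : ∀ k ≤ ρ.len, ρ.nodes k ∈ S → ρ.signal ω k = ρ.signal ω' k) (hs : ρ.Reveals S s) :
    ∑ i ∈ s, ω i = ∑ i ∈ s, ω' i := by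
  obtain ⟨k, hk, hkS, rfl⟩ := hs
  exact hS k hk hkS

/-- A revealed sum of two bits either has its two bits linked, so that both are taken from the
same sequence, or one of the bits is itself revealed, so that the sequences agree on both. -/
lemma signal_piecewise_of_mem {T : Set ℕ} (hT : ∀ i j, ρ.Linked S i j → (i ∈ T ↔ j ∈ T))
    (hS : ∀ k ≤ ρ.len, ρ.nodes k ∈ S → ρ.signal ω k = ρ.signal ω' k) (hk : k ≤ ρ.len)
    (hkS : ρ.nodes k ∈ S) : ρ.signal (T.piecewise ω ω') k = ρ.signal ω k := by
  have h_bit : ∀ i, ρ.Reveals S {i} → ω i = ω' i := fun i hi => by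
    simpa using sum_eq_of_reveals hS hi
  have h_signal := hS k hk hkS
  by_cases hc : ρ.InColliderBlock k
  · have h_pair : ρ.Reveals S {ρ.bitIndex k, ρ.bitIndex k + 1} :=
      ⟨k, hk, hkS, bits_of_inColliderBlock hc⟩
    simp only [signal_of_inColliderBlock hc] at h_signal ⊢
    generalize ρ.bitIndex k = b at h_pair h_signal ⊢
    by_cases h : ρ.Reveals S {b} ∨ ρ.Reveals S {b + 1}
    · obtain ⟨hb, hb'⟩ : ω b = ω' b ∧ ω (b + 1) = ω' (b + 1) := by
        rcases h with h | h
        · exact ⟨h_bit b h, by rwa [h_bit b h, add_right_inj] at h_signal⟩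
        · exact ⟨by rwa [h_bit (b + 1) h, add_left_inj] at h_signal, h_bit (b + 1) h⟩
      simp [Set.piecewise, hb, hb']
    · have h_iff := hT b (b + 1) (linked_succ (not_or.1 h).1 (not_or.1 h).2 h_pair)
      by_cases hb : b ∈ T
      · simp [hb, h_iff.1 hb]
      · simp [hb, mt h_iff.2 hb, h_signal]
  · simp only [signal_of_not_inColliderBlock hc] at h_signal ⊢
    simp [Set.piecewise, h_signal]

lemma signal_eq_of_exposes (hS : ∀ k ≤ ρ.len, ρ.nodes k ∈ S → ρ.signal m k = ρ.signal ω k)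
    (h_exposed : ∀ i, ρ.Exposes S k i → m i = ω i) : ρ.signal m k = ρ.signal ω k := by
  by_cases h_all : ρ.Reveals S (ρ.bits k)
  · exact sum_eq_of_reveals hS h_all
  refine Finset.sum_congr rfl fun i hi => ?_
  by_cases h_bit : ρ.Reveals S {i}
  · simpa using sum_eq_of_reveals hS h_bit
  · exact h_exposed i ⟨hi, h_all, h_bit⟩

lemma signal_piecewise_reach_of_mem
    (hS : ∀ k ≤ ρ.len, ρ.nodes k ∈ S → ρ.signal ω k = ρ.signal ω' k) (hk : k ≤ ρ.len)
    (hkS : ρ.nodes k ∈ S) : ρ.signal ((ρ.reach A S).piecewise ω ω') k = ρ.signal ω k :=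
  signal_piecewise_of_mem (fun _ _ h => h.mem_reach_iff) hS hk hkS

lemma signal_piecewise_reach_of_mem_left
    (hS : ∀ k ≤ ρ.len, ρ.nodes k ∈ S → ρ.signal ω k = ρ.signal ω' k) (hk : k ≤ ρ.len)
    (hkA : ρ.nodes k ∈ A) : ρ.signal ((ρ.reach A S).piecewise ω ω') k = ρ.signal ω k :=
  signal_eq_of_exposes (fun _ => signal_piecewise_reach_of_mem hS) fun i hi =>
    Set.piecewise_eq_of_mem _ _ _ ⟨k, hk, hkA, i, hi, .refl i⟩

lemma signal_piecewise_reach_of_mem_right (hG : G.NoParallelEdges) (h_sep : G.Sep A B S)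
    (hS : ∀ k ≤ ρ.len, ρ.nodes k ∈ S → ρ.signal ω k = ρ.signal ω' k) (hk : k ≤ ρ.len)
    (hkB : ρ.nodes k ∈ B) : ρ.signal ((ρ.reach A S).piecewise ω ω') k = ρ.signal ω' k :=
  signal_eq_of_exposes
    (fun t ht htS => (signal_piecewise_reach_of_mem hS ht htS).trans (hS t ht htS))
    fun _ hi => Set.piecewise_eq_of_notMem _ _ _ (notMem_reach_of_exposes hG h_sep hk hkB hi)

end Recombination

section OpenRoute

variable {ρ} {ω : ℕ → ZMod 2} {S : Finset V} {k : ℕ}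

lemma IsZOpen.signal_eq_zero (hρ : ρ.IsZOpen S) {c : ZMod 2} (hω : ∀ i ≤ ρ.len + 1, ω i = c)
    (hk : k ≤ ρ.len) (hkS : ρ.nodes k ∈ S) : ρ.signal ω k = 0 := by
  have hc : ρ.InColliderBlock k := by
    by_contra hc
    exact (isZOpen_iff.1 hρ).2 k hk hc hkS
  have h_le := (ρ.bitIndex_le k).trans hk
  rw [signal_of_inColliderBlock hc, hω _ (by omega), hω _ (by omega),
    CharTwo.add_self_eq_zero]

lemma IsZOpen.bit_eq_zero_bit (hG : G.NoParallelEdges) (hρ : ρ.IsZOpen S)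
    (hω : ∀ k ≤ ρ.len, ρ.nodes k ∈ S → ρ.signal ω k = 0) (hk : k ≤ ρ.len) :
    ω (ρ.bitIndex k) = ω 0 := by
  induction k with
  | zero => rw [bitIndex_zero]
  | succ k ih =>
    by_cases h_end : ∃ p, ρ.IsColliderBlock p k
    · obtain ⟨p, h⟩ := h_end
      obtain ⟨m, hm, hm', hmS⟩ := (isZOpen_iff.1 hρ).1 p k h
      have h_sum := hω m (by omega) hmS
      rw [signal_of_inColliderBlock (h.inColliderBlock hm hm'), h.bitIndex_eq hG hm hm',
        ← h.bitIndex_eq hG h.le le_rfl, CharTwo.add_eq_zero] at h_sum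
      rw [h.bitIndex_end_succ, ← h_sum, ih (by omega)]
    · rw [bitIndex_succ_of_not_end h_end, ih (by omega)]

lemma IsZOpen.signal_len_eq_signal_zero (hG : G.NoParallelEdges) (hρ : ρ.IsZOpen S)
    (hω : ∀ k ≤ ρ.len, ρ.nodes k ∈ S → ρ.signal ω k = 0) :
    ρ.signal ω ρ.len = ρ.signal ω 0 := by
  rw [signal_of_not_inColliderBlock not_inColliderBlock_len,
    signal_of_not_inColliderBlock not_inColliderBlock_zero, bitIndex_zero,
    hρ.bit_eq_zero_bit hG hω le_rfl]

end OpenRoute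

section SignalVector

/-- The bits of `ω`, followed by zeros. -/
def extendBits {n : ℕ} (ω : Fin n → ZMod 2) : ℕ → ZMod 2 := Function.extend Fin.val ω 0

/-- The random vector of the proof, as a function of the independent fair bits `ω`: its
coordinate at `v` encodes, as a real number, the signals at all visits of `ρ` to `v`. The indices
of bits occurring in `ρ` are at most `ρ.len + 1`. -/
def signalVector (ω : Fin (ρ.len + 2) → ZMod 2) (v : V) : ℝ :=
  (Fintype.equivFin (Fin (ρ.len + 1) → ZMod 2)
    fun k => if ρ.nodes k = v then ρ.signal (extendBits ω) k else 0 : ℕ)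

lemma extendBits_apply {n : ℕ} (ω : Fin n → ZMod 2) (i : Fin n) : extendBits ω i = ω i :=
  Fin.val_injective.extend_apply ω 0 i

lemma extendBits_piecewise {n : ℕ} (T : Set ℕ) (ω ω' : Fin n → ZMod 2) :
    extendBits ((Fin.val ⁻¹' T).piecewise ω ω') =
      T.piecewise (extendBits ω) (extendBits ω') := by
  ext i
  by_cases hi : ∃ j : Fin n, j.val = i
  · obtain ⟨j, rfl⟩ := hi
    by_cases hj : j.val ∈ T <;> simp [extendBits_apply, Set.piecewise, hj]
  · simp [extendBits, Function.extend_apply' _ _ _ hi, Set.piecewise]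

variable {ρ}

lemma marg_signalVector_eq_iff {S : Finset V} {ω ω' : Fin (ρ.len + 2) → ZMod 2} :
    marg S (ρ.signalVector ω) = marg S (ρ.signalVector ω') ↔ ∀ k ≤ ρ.len, ρ.nodes k ∈ S →
      ρ.signal (extendBits ω) k = ρ.signal (extendBits ω') k := by
  simp only [funext_iff, marg, signalVector, Nat.cast_inj, Fin.val_inj,
    EmbeddingLike.apply_eq_iff_eq]
  constructor
  · intro h k hk hkS
    simpa using h ⟨_, hkS⟩ ⟨k, Nat.lt_succ_of_le hk⟩
  · rintro h ⟨v, hv⟩ k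
    by_cases hk : ρ.nodes k = v
    · rw [h k (Nat.le_of_lt_succ k.2) (hk ▸ hv)]
    · simp [hk]

lemma measGlobalMarkov_map_signalVector [Fintype V] [DecidableEq V] (hG : G.NoParallelEdges) :
    measGlobalMarkov G ((uniformOn Set.univ).map ρ.signalVector) := by
  intro A B S _ h_sep
  refine mCI_map_uniformOn_of_recombination _
    (fun ω ω' => (Fin.val ⁻¹' ρ.reach A S).piecewise ω ω') (fun ω ω' => ?_) fun ω ω' h => ?_
  · ext i
    by_cases hi : i.val ∈ ρ.reach A S <;> simp [hi]
  · simp only [marg_signalVector_eq_iff, extendBits_piecewise] at h ⊢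
    exact ⟨fun _ => signal_piecewise_reach_of_mem h,
      fun _ => signal_piecewise_reach_of_mem_left h,
      fun _ => signal_piecewise_reach_of_mem_right hG h_sep h⟩

lemma IsZOpen.not_mCI_map_signalVector [Fintype V] (hG : G.NoParallelEdges) {A B S : Finset V}
    (hρ : ρ.IsZOpen S) (hA : ρ.nodes 0 ∈ A) (hB : ρ.nodes ρ.len ∈ B) :
    ¬ mCI ((uniformOn Set.univ).map ρ.signalVector) A B S := by
  intro h
  have extendBits_const (c : ZMod 2) : ∀ i ≤ ρ.len + 1,
      extendBits (fun _ : Fin (ρ.len + 2) => c) i = c := fun i hi =>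
    extendBits_apply _ ⟨i, Nat.lt_succ_of_le hi⟩
  have signal_const (c : ZMod 2) : ∀ k ≤ ρ.len, ρ.nodes k ∈ S →
      ρ.signal (extendBits fun _ : Fin (ρ.len + 2) => c) k = 0 := fun _ =>
    hρ.signal_eq_zero (extendBits_const c)
  obtain ⟨ω, hωS, hωA, hωB⟩ := exists_recombination_of_mCI_map_uniformOn h
    (marg_signalVector_eq_iff.2 fun k hk hkS =>
      (signal_const 0 k hk hkS).trans (signal_const 1 k hk hkS).symm)
  rw [marg_signalVector_eq_iff] at hωS hωA hωB
  have h_ends := hρ.signal_len_eq_signal_zero hG fun k hk hkS =>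
    (hωS k hk hkS).trans (signal_const 1 k hk hkS)
  rw [hωA 0 (Nat.zero_le _) hA, hωB _ le_rfl hB,
    signal_of_not_inColliderBlock not_inColliderBlock_len,
    signal_of_not_inColliderBlock not_inColliderBlock_zero,
    extendBits_const 0 _ ((ρ.bitIndex_le 0).trans (Nat.zero_le _)),
    extendBits_const 1 _ ((ρ.bitIndex_le _).trans (Nat.le_succ _))] at h_ends
  exact one_ne_zero h_ends

end SignalVector

end Route

variable [Fintype V] [DecidableEq V] {G H : PreGraph V}

lemma sep_of_forall_mCI (hG : G.NoParallelEdges) {A B S : Finset V}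
    (h : ∀ μ : ProbabilityMeasure (V → ℝ), measGlobalMarkov G (μ : Measure (V → ℝ)) →
      mCI (μ : Measure (V → ℝ)) A B S) :
    G.Sep A B S := by
  rintro ⟨ρ, h_ends, hρ⟩
  have h_mCI : mCI ((uniformOn Set.univ).map ρ.signalVector) A B S :=
    h ⟨_, Measure.isProbabilityMeasure_map Measurable.of_discrete.aemeasurable⟩
      (Route.measGlobalMarkov_map_signalVector hG)
  rcases h_ends with ⟨hA, hB⟩ | ⟨hB, hA⟩
  · exact hρ.not_mCI_map_signalVector hG hA hB h_mCI
  · exact hρ.not_mCI_map_signalVector hG hB hA (CondIndepFun.symm h_mCI)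

lemma setOf_measGlobalMarkov_subset_iff (hG : G.NoParallelEdges) :
    {μ : ProbabilityMeasure (V → ℝ) | measGlobalMarkov G (μ : Measure (V → ℝ))} ⊆
        {μ : ProbabilityMeasure (V → ℝ) | measGlobalMarkov H (μ : Measure (V → ℝ))} ↔
      ∀ X Y Z : Finset V, PDisj X Y Z → H.Sep X Y Z → G.Sep X Y Z :=
  ⟨fun h_sub X Y Z h_disj h_sep =>
      sep_of_forall_mCI hG fun _ hμ => h_sub hμ X Y Z h_disj h_sep,
    fun h_sep _ hμ X Y Z h_disj hH => hμ X Y Z h_disj (h_sep X Y Z h_disj hH)⟩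

end PreGraph

lemma ChainGraph.noParallelEdges (G : ChainGraph V) : G.toPreGraph.NoParallelEdges where
  not_solid_of_und h := G.undir_not_solid _ _ (h.elim id (G.undir_symm _ _))
  not_dashed_of_und h := G.undir_not_dashed _ _ (h.elim id (G.undir_symm _ _))
  not_dashed_of_solid := G.solid_not_dashed _ _

theorem lwf_markov_equivalent_iff_same_separations_general
    {V : Type*} [Fintype V] [DecidableEq V] {G H : PreGraph V} (hG : G.NoParallelEdges)
    (hH : H.NoParallelEdges) :
    ({μ : ProbabilityMeasure (V → ℝ) | measGlobalMarkov G (μ : Measure (V → ℝ))} =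
      {μ : ProbabilityMeasure (V → ℝ) | measGlobalMarkov H (μ : Measure (V → ℝ))}) ↔
    ∀ X Y Z : Finset V, PDisj X Y Z → (G.Sep X Y Z ↔ H.Sep X Y Z) := by
  rw [Set.Subset.antisymm_iff, PreGraph.setOf_measGlobalMarkov_subset_iff hG,
    PreGraph.setOf_measGlobalMarkov_subset_iff hH]
  constructor
  · rintro ⟨hHG, hGH⟩ X Y Z h_disj
    exact ⟨hGH X Y Z h_disj, hHG X Y Z h_disj⟩
  · intro h
    exact ⟨fun X Y Z h_disj => (h X Y Z h_disj).2, fun X Y Z h_disj => (h X Y Z h_disj).1⟩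

/-- **Theorem 1 (LWF case).** Two LWF chain graphs `G` and `H` over the same finite vertex
set are Markov equivalent (the probability distributions on `ℝ^V` satisfying the global
Markov property with respect to `G` are exactly those satisfying it with respect to `H`)
if and only if they represent the same separations. -/
theorem lwf_markov_equivalent_iff_same_separations
    {V : Type*} [Fintype V] [DecidableEq V] (G H : ChainGraph V)
    (hG : G.IsLWF) (hH : H.IsLWF) :
    ({μ : ProbabilityMeasure (V → ℝ) | measGlobalMarkov G.toPreGraph (↑μ)} =
      {μ : ProbabilityMeasure (V → ℝ) | measGlobalMarkov H.toPreGraph (↑μ)}) ↔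
    ∀ X Y Z : Finset V, PDisj X Y Z →
      (G.toPreGraph.Sep X Y Z ↔ H.toPreGraph.Sep X Y Z) := by
  exact lwf_markov_equivalent_iff_same_separations_general G.noParallelEdges H.noParallelEdges
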